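/- (Proposition 1, known-variance case, coverage of the full-model target) In the two-nested-model setting, ℙ_{μ,σ}(β_{1·M₂} ∈ β̂_{1·M̂} ± K σ_{1·M̂}) = ℙ_{μ,σ}(β_{1·M̂} ∈ β̂_{1·M̂} ± K σ_{1·M̂}) + [Δ(ρζ/√(1−ρ²), K) − Δ(0, K)]·Δ(ζ, C), with notation as in the companion formula. -/

import Mathlib

open MeasureTheory ProbabilityTheory Matrix
open scoped ENNReal NNReal Classical

/-- The Gaussian linear model measure: the law of `y = μ + u`, `u ~ N(0, σ²Iₙ)`. -/
noncomputable def gaussianLinearModel {n : ℕ} (μ : Fin n → ℝ) (σ : ℝ) :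
    Measure (Fin n → ℝ) :=
  Measure.pi fun i => gaussianReal (μ i) (Real.toNNReal (σ ^ 2))

/-- Standard normal cumulative distribution function `Φ`. -/
noncomputable def Phi (x : ℝ) : ℝ := ((gaussianReal 0 1) (Set.Iic x)).toReal

/-- `Δ(x, c) = Φ(x + c) − Φ(x − c)`. -/
noncomputable def Dlt (x c : ℝ) : ℝ := Phi (x + c) - Phi (x - c)

namespace TwoNested

variable {n : ℕ}

/-- `(X'X)⁻¹` for the full model `M₂ = {1, 2}`. -/
noncomputable def Ai (X : Matrix (Fin n) (Fin 2) ℝ) : Matrix (Fin 2) (Fin 2) ℝ :=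
  (Xᵀ * X)⁻¹

/-- Least-squares estimator in the full model `M₂`. -/
noncomputable def bhat2 (X : Matrix (Fin n) (Fin 2) ℝ) (y : Fin n → ℝ) : Fin 2 → ℝ :=
  (Ai X * Xᵀ) *ᵥ y

/-- Least-squares estimator in the restricted model `M₁ = {1}`. -/
noncomputable def bhat1 (X : Matrix (Fin n) (Fin 2) ℝ) (y : Fin n → ℝ) : ℝ :=
  (∑ i, X i 0 * y i) / (∑ i, X i 0 ^ 2)

/-- `σ_{1·M₂} = σ √([(X'X)⁻¹]₁₁)`. -/
noncomputable def sd1M2 (X : Matrix (Fin n) (Fin 2) ℝ) (σ : ℝ) : ℝ :=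
  σ * Real.sqrt (Ai X 0 0)

/-- `σ_{2·M₂} = σ √([(X'X)⁻¹]₂₂)`, the standard deviation of `β̂_{2·M₂}`. -/
noncomputable def sd2M2 (X : Matrix (Fin n) (Fin 2) ℝ) (σ : ℝ) : ℝ :=
  σ * Real.sqrt (Ai X 1 1)

/-- `σ_{1·M₁} = σ √((X₁'X₁)⁻¹)`. -/
noncomputable def sd1M1 (X : Matrix (Fin n) (Fin 2) ℝ) (σ : ℝ) : ℝ :=
  σ * Real.sqrt (∑ i, X i 0 ^ 2)⁻¹

/-- The correlation `ρ` between the two components of `β̂_{M₂}`. -/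
noncomputable def rho (X : Matrix (Fin n) (Fin 2) ℝ) : ℝ :=
  -(Ai X 0 1) / Real.sqrt (Ai X 0 0 * Ai X 1 1)

/-- `ζ = β_{2·M₂} / SD(β̂_{2·M₂})`. -/
noncomputable def zeta (X : Matrix (Fin n) (Fin 2) ℝ) (μ : Fin n → ℝ) (σ : ℝ) : ℝ :=
  bhat2 X μ 1 / sd2M2 X σ

/-- The coverage event for the selected-model target `β_{1·M̂}`, where `M̂ = M₂` iff
`|β̂_{2·M₂}|/σ_{2·M₂} > C`, with interval `β̂_{1·M̂} ± K σ_{1·M̂}`. -/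
def covSelEvent (X : Matrix (Fin n) (Fin 2) ℝ) (μ : Fin n → ℝ) (σ C K : ℝ) :
    Set (Fin n → ℝ) :=
  {y | if |bhat2 X y 1| / sd2M2 X σ > C
    then |bhat2 X y 0 - bhat2 X μ 0| ≤ K * sd1M2 X σ
    else |bhat1 X y - bhat1 X μ| ≤ K * sd1M1 X σ}

/-- The coverage event for the full-model target `β_{1·M₂}`, with the same selector
and the same interval `β̂_{1·M̂} ± K σ_{1·M̂}`. -/
def covFullEvent (X : Matrix (Fin n) (Fin 2) ℝ) (μ : Fin n → ℝ) (σ C K : ℝ) :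
    Set (Fin n → ℝ) :=
  {y | if |bhat2 X y 1| / sd2M2 X σ > C
    then |bhat2 X y 0 - bhat2 X μ 0| ≤ K * sd1M2 X σ
    else |bhat1 X y - bhat2 X μ 0| ≤ K * sd1M1 X σ}

end TwoNested

open TwoNested

/-!
The two coverage events agree when `M₂` is selected, so their probabilities differ only through
the part where `M₁` is selected. On that part `bhat1` is a combination of the first column of `X`,
which is orthogonal to the weight vector of the second component of `bhat2`. Gaussianity then makes
`bhat1` independent of the selector, and the probability of covering a target `t` while selecting
`M₁` factors as `Δ((E bhat1 - t) / σ_{1·M₁}, K) · Δ(ζ, C)`. The standardized bias vanishes for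
`t = β_{1·M₁}`; for `t = β_{1·M₂}` the omitted-variable formula and
`σ_{1·M₁} = σ_{1·M₂} √(1 - ρ²)` give `ρ ζ / √(1 - ρ²)`.
-/

section StandardNormal

theorem Phi_eq_cdf (x : ℝ) : Phi x = cdf (gaussianReal 0 1) x :=
  (cdf_eq_real _ x).symm

theorem Dlt_eq_measureReal_closedBall (x : ℝ) {c : ℝ} (hc : 0 ≤ c) :
    Dlt x c = (gaussianReal 0 1).real (Metric.closedBall x c) := by
  have : NullSingletonClass (gaussianReal 0 1) := nullSingletonClass_gaussianReal one_ne_zero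
  have hmono : cdf (gaussianReal 0 1) (x - c) ≤ cdf (gaussianReal 0 1) (x + c) :=
    monotone_cdf _ (by linarith)
  have hIoc : (gaussianReal 0 1).real (Set.Ioc (x - c) (x + c)) =
      cdf (gaussianReal 0 1) (x + c) - cdf (gaussianReal 0 1) (x - c) := by
    conv_lhs => rw [← measure_cdf (gaussianReal 0 1)]
    rw [measureReal_def, StieltjesFunction.measure_Ioc, ENNReal.toReal_ofReal (sub_nonneg.2 hmono)]
  rw [Real.closedBall_eq_Icc, ← measureReal_congr Ioc_ae_eq_Icc, hIoc, Dlt, Phi_eq_cdf, Phi_eq_cdf]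

-- The minus sign turns `|m - s z - t| ≤ K s` into `|z - (m - t) / s| ≤ K`, centred as in `Dlt`.
theorem gaussianReal_map_sub_mul (m s : ℝ) :
    (gaussianReal 0 1).map (fun z ↦ m - s * z) = gaussianReal m (s ^ 2).toNNReal := by
  have hvar : NNReal.mk (s ^ 2) (sq_nonneg s) * 1 = (s ^ 2).toNNReal := by
    rw [mul_one, Real.toNNReal_of_nonneg (sq_nonneg s)]
  have hid : HasLaw (fun z : ℝ ↦ z) (gaussianReal 0 1) (gaussianReal 0 1) := HasLaw.id
  simpa [hvar] using (gaussianReal_const_sub (gaussianReal_const_mul hid s) m).map_eq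

theorem measureReal_gaussianReal_closedBall (m t : ℝ) {s K : ℝ} (hs : 0 < s) (hK : 0 ≤ K) :
    (gaussianReal m (s ^ 2).toNNReal).real (Metric.closedBall t (K * s)) =
      Dlt ((m - t) / s) K := by
  have hpre : (fun z ↦ m - s * z) ⁻¹' Metric.closedBall t (K * s) =
      Metric.closedBall ((m - t) / s) K := by
    ext z
    have hdist : m - s * z - t = -(z - (m - t) / s) * s := by field_simp; ring
    rw [Set.mem_preimage, Metric.mem_closedBall, Metric.mem_closedBall, Real.dist_eq,
      Real.dist_eq, hdist, abs_mul, abs_neg, abs_of_pos hs, mul_le_mul_iff_left₀ hs]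
  rw [← gaussianReal_map_sub_mul, map_measureReal_apply (by fun_prop) measurableSet_closedBall,
    hpre, Dlt_eq_measureReal_closedBall _ hK]

theorem measureReal_preimage_closedBall_of_hasLaw_gaussianReal {Ω : Type*} [MeasurableSpace Ω]
    {P : Measure Ω} {Z : Ω → ℝ} {m s K : ℝ} (hZ : HasLaw Z (gaussianReal m (s ^ 2).toNNReal) P)
    (t : ℝ) (hs : 0 < s) (hK : 0 ≤ K) :
    P.real (Z ⁻¹' Metric.closedBall t (K * s)) = Dlt ((m - t) / s) K :=
  (hZ.measureReal_eq measurableSet_closedBall).trans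
    (measureReal_gaussianReal_closedBall m t hs hK)

end StandardNormal

namespace gaussianLinearModel

variable {n : ℕ} (μ : Fin n → ℝ) (σ : ℝ)

instance : IsProbabilityMeasure (gaussianLinearModel μ σ) := by
  unfold gaussianLinearModel; infer_instance

theorem hasLaw_eval (i : Fin n) :
    HasLaw (fun y ↦ y i) (gaussianReal (μ i) (σ ^ 2).toNNReal) (gaussianLinearModel μ σ) :=
  (measurePreserving_eval (fun i ↦ gaussianReal (μ i) (σ ^ 2).toNNReal) i).hasLaw

theorem iIndepFun_eval :
    iIndepFun (fun (i : Fin n) (y : Fin n → ℝ) ↦ y i) (gaussianLinearModel μ σ) :=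
  iIndepFun_pi (X := fun _ x ↦ x) fun _ ↦ by fun_prop

theorem hasGaussianLaw_eval (i : Fin n) :
    HasGaussianLaw (fun y ↦ y i) (gaussianLinearModel μ σ) :=
  (hasLaw_eval μ σ i).hasGaussianLaw

theorem hasGaussianLaw_id : HasGaussianLaw (fun y ↦ y) (gaussianLinearModel μ σ) :=
  (iIndepFun_eval μ σ).hasGaussianLaw (hasGaussianLaw_eval μ σ)

theorem hasGaussianLaw_dotProduct_prodMk (u v : Fin n → ℝ) :
    HasGaussianLaw (fun y ↦ (u ⬝ᵥ y, v ⬝ᵥ y)) (gaussianLinearModel μ σ) :=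
  (hasGaussianLaw_id μ σ).map_fun <|
    ((dotProductBilin ℝ ℝ u).prod (dotProductBilin ℝ ℝ v)).toContinuousLinearMap

theorem integral_dotProduct (u : Fin n → ℝ) :
    ∫ y, u ⬝ᵥ y ∂gaussianLinearModel μ σ = u ⬝ᵥ μ := by
  simp only [dotProduct]
  rw [integral_finsetSum _ fun i _ ↦ (hasGaussianLaw_eval μ σ i).integrable.const_mul (u i)]
  simp only [integral_const_mul, (hasLaw_eval μ σ _).integral_eq, integral_id_gaussianReal]

theorem covariance_eval (i j : Fin n) :
    cov[fun y ↦ y i, fun y ↦ y j; gaussianLinearModel μ σ] = if i = j then σ ^ 2 else 0 := by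
  split_ifs with hij
  · subst hij
    rw [covariance_self (hasLaw_eval μ σ i).aemeasurable, (hasLaw_eval μ σ i).variance_eq,
      variance_id_gaussianReal, Real.coe_toNNReal _ (sq_nonneg σ)]
  · exact ((iIndepFun_eval μ σ).indepFun hij).covariance_eq_zero
      (hasGaussianLaw_eval μ σ i).memLp_two (hasGaussianLaw_eval μ σ j).memLp_two

theorem covariance_dotProduct (u v : Fin n → ℝ) :
    cov[fun y ↦ u ⬝ᵥ y, fun y ↦ v ⬝ᵥ y; gaussianLinearModel μ σ] = σ ^ 2 * (u ⬝ᵥ v) := by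
  have hmemLp (w : Fin n → ℝ) (i : Fin n) :
      MemLp (fun y ↦ w i * y i) 2 (gaussianLinearModel μ σ) :=
    (hasGaussianLaw_eval μ σ i).memLp_two.const_mul (w i)
  simp only [dotProduct]
  rw [covariance_fun_sum_fun_sum (hmemLp u) (hmemLp v), Finset.mul_sum]
  refine Finset.sum_congr rfl fun i _ ↦ ?_
  simp only [covariance_const_mul_left, covariance_const_mul_right, covariance_eval, mul_ite,
    mul_zero, Finset.sum_ite_eq, Finset.mem_univ, if_true]
  ring

theorem hasLaw_dotProduct (u : Fin n → ℝ) :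
    HasLaw (fun y ↦ u ⬝ᵥ y) (gaussianReal (u ⬝ᵥ μ) (σ ^ 2 * (u ⬝ᵥ u)).toNNReal)
      (gaussianLinearModel μ σ) := by
  have hu := (hasGaussianLaw_dotProduct_prodMk μ σ u u).fst
  refine ⟨hu.aemeasurable, ?_⟩
  rw [hu.map_eq_gaussianReal, integral_dotProduct, ← covariance_self hu.aemeasurable,
    covariance_dotProduct]

theorem indepFun_dotProduct {u v : Fin n → ℝ} (huv : u ⬝ᵥ v = 0) :
    IndepFun (fun y ↦ u ⬝ᵥ y) (fun y ↦ v ⬝ᵥ y) (gaussianLinearModel μ σ) :=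
  (hasGaussianLaw_dotProduct_prodMk μ σ u v).indepFun_of_covariance_eq_zero <| by
    rw [covariance_dotProduct, huv, mul_zero]

end gaussianLinearModel

theorem posDef_transpose_mul_self_of_rank_eq_card {m p : Type*} [Fintype m] [Fintype p]
    {X : Matrix m p ℝ} (hX : X.rank = Fintype.card p) : (Xᵀ * X).PosDef := by
  have hcol : LinearIndependent ℝ X.col :=
    linearIndependent_iff_card_eq_finrank_span.2 <| by
      rw [Set.finrank, ← rank_eq_finrank_span_cols, hX]
  simpa using PosDef.conjTranspose_mul_self X (mulVec_injective_iff.2 hcol)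

namespace TwoNested

variable {n : ℕ} {X : Matrix (Fin n) (Fin 2) ℝ} {σ C K : ℝ}

theorem sum_sq_eq_gram (X : Matrix (Fin n) (Fin 2) ℝ) : ∑ i, X i 0 ^ 2 = (Xᵀ * X) 0 0 := by
  simp [mul_apply, sq]

theorem posDef_gram (hX : X.rank = 2) : (Xᵀ * X).PosDef :=
  posDef_transpose_mul_self_of_rank_eq_card (by simpa using hX)

theorem posDef_Ai (hX : X.rank = 2) : (Ai X).PosDef :=
  (posDef_gram hX).inv

theorem gram_mul_Ai (hX : X.rank = 2) : Xᵀ * X * Ai X = 1 :=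
  mul_nonsing_inv _ <| (isUnit_iff_isUnit_det _).1 (posDef_gram hX).isUnit

theorem Ai_mul_gram (hX : X.rank = 2) : Ai X * (Xᵀ * X) = 1 :=
  nonsing_inv_mul _ <| (isUnit_iff_isUnit_det _).1 (posDef_gram hX).isUnit

theorem isSymm_Ai (X : Matrix (Fin n) (Fin 2) ℝ) : (Ai X).IsSymm := by
  rw [IsSymm, Ai, transpose_nonsing_inv, transpose_mul, transpose_transpose]

theorem gram_mulVec_bhat2 (hX : X.rank = 2) (y : Fin n → ℝ) :
    (Xᵀ * X) *ᵥ bhat2 X y = Xᵀ *ᵥ y := by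
  rw [bhat2, mulVec_mulVec, ← Matrix.mul_assoc, gram_mul_Ai hX, Matrix.one_mul]

theorem gram_zero_one_eq (hX : X.rank = 2) :
    (Xᵀ * X) 0 1 = -((Xᵀ * X) 0 0 * (Ai X 0 1 / Ai X 1 1)) := by
  have hA : Ai X 1 1 ≠ 0 := (posDef_Ai hX).diag_pos.ne'
  have h01 := congr_fun₂ (gram_mul_Ai hX) 0 1
  rw [mul_apply, Fin.sum_univ_two, one_apply_ne (by decide)] at h01
  field_simp
  linarith

-- Omitted-variable bias: `-A₀₁ / A₁₁` is the slope of the dropped column on the retained one.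
theorem bhat1_eq_bhat2_sub (hX : X.rank = 2) (y : Fin n → ℝ) :
    bhat1 X y = bhat2 X y 0 - Ai X 0 1 / Ai X 1 1 * bhat2 X y 1 := by
  have hG : (Xᵀ * X) 0 0 ≠ 0 := (posDef_gram hX).diag_pos.ne'
  have hnormal := congr_fun (gram_mulVec_bhat2 hX y) 0
  simp only [mulVec, dotProduct, Fin.sum_univ_two, transpose_apply, gram_zero_one_eq hX] at hnormal
  rw [bhat1, sum_sq_eq_gram, div_eq_iff hG, ← hnormal]
  ring

theorem Ai_zero_zero_mul_Ai_one_one_pos (hX : X.rank = 2) : 0 < Ai X 0 0 * Ai X 1 1 :=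
  mul_pos (posDef_Ai hX).diag_pos (posDef_Ai hX).diag_pos

theorem rho_sq (hX : X.rank = 2) : rho X ^ 2 = Ai X 0 1 ^ 2 / (Ai X 0 0 * Ai X 1 1) := by
  rw [rho, div_pow, neg_sq, Real.sq_sqrt (Ai_zero_zero_mul_Ai_one_one_pos hX).le]

theorem inv_sum_sq (hX : X.rank = 2) :
    (∑ i, X i 0 ^ 2)⁻¹ = Ai X 0 0 * (1 - rho X ^ 2) := by
  have hA₀ : Ai X 0 0 ≠ 0 := (posDef_Ai hX).diag_pos.ne'
  have hA₁ : Ai X 1 1 ≠ 0 := (posDef_Ai hX).diag_pos.ne'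
  have h00 := congr_fun₂ (gram_mul_Ai hX) 0 0
  rw [mul_apply, Fin.sum_univ_two, gram_zero_one_eq hX, (isSymm_Ai X).apply 0 1,
    one_apply_eq] at h00
  rw [rho_sq hX, sum_sq_eq_gram]
  refine inv_eq_of_mul_eq_one_right (Eq.trans ?_ h00)
  field_simp
  ring

theorem one_sub_rho_sq_pos (hX : X.rank = 2) : 0 < 1 - rho X ^ 2 := by
  have hinv : 0 < (∑ i, X i 0 ^ 2)⁻¹ := by
    rw [sum_sq_eq_gram]
    exact inv_pos.2 (posDef_gram hX).diag_pos
  rw [inv_sum_sq hX] at hinv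
  exact (pos_iff_pos_of_mul_pos hinv).1 (posDef_Ai hX).diag_pos

theorem sd1M1_eq (hX : X.rank = 2) (σ : ℝ) :
    sd1M1 X σ = sd1M2 X σ * √(1 - rho X ^ 2) := by
  rw [sd1M1, sd1M2, inv_sum_sq hX, Real.sqrt_mul (posDef_Ai hX).diag_pos.le, mul_assoc]

theorem sd1M2_pos (hX : X.rank = 2) (hσ : 0 < σ) : 0 < sd1M2 X σ :=
  mul_pos hσ (Real.sqrt_pos.2 (posDef_Ai hX).diag_pos)

theorem sd2M2_pos (hX : X.rank = 2) (hσ : 0 < σ) : 0 < sd2M2 X σ :=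
  mul_pos hσ (Real.sqrt_pos.2 (posDef_Ai hX).diag_pos)

theorem sd1M1_pos (hX : X.rank = 2) (hσ : 0 < σ) : 0 < sd1M1 X σ := by
  rw [sd1M1_eq hX]
  exact mul_pos (sd1M2_pos hX hσ) (Real.sqrt_pos.2 (one_sub_rho_sq_pos hX))

theorem rho_mul_zeta (hX : X.rank = 2) (hσ : 0 < σ) (μ : Fin n → ℝ) :
    rho X * zeta X μ σ = (bhat1 X μ - bhat2 X μ 0) / sd1M2 X σ := by
  have hA₀ : 0 < Ai X 0 0 := (posDef_Ai hX).diag_pos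
  have hA₁ : 0 < Ai X 1 1 := (posDef_Ai hX).diag_pos
  rw [rho, zeta, sd1M2, sd2M2, bhat1_eq_bhat2_sub hX, Real.sqrt_mul hA₀.le]
  field_simp
  rw [Real.sq_sqrt hA₁.le]
  ring

theorem standardized_bias_bhat1 (hX : X.rank = 2) (hσ : 0 < σ) (μ : Fin n → ℝ) :
    (bhat1 X μ - bhat2 X μ 0) / sd1M1 X σ = rho X * zeta X μ σ / √(1 - rho X ^ 2) := by
  rw [rho_mul_zeta hX hσ, sd1M1_eq hX, div_div]

/-- The vector `w` with `bhat1 X y = w ⬝ᵥ y`, from which the law of `bhat1` is read off. -/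
noncomputable def bhat1Weights (X : Matrix (Fin n) (Fin 2) ℝ) : Fin n → ℝ :=
  (∑ i, X i 0 ^ 2)⁻¹ • X.col 0

/-- The matrix whose row `j` is the vector `w` with `bhat2 X y j = w ⬝ᵥ y`. -/
noncomputable def bhat2Weights (X : Matrix (Fin n) (Fin 2) ℝ) : Matrix (Fin 2) (Fin n) ℝ :=
  Ai X * Xᵀ

theorem bhat1_eq_dotProduct (X : Matrix (Fin n) (Fin 2) ℝ) (y : Fin n → ℝ) :
    bhat1 X y = bhat1Weights X ⬝ᵥ y := by
  rw [bhat1, bhat1Weights, smul_dotProduct, smul_eq_mul, inv_mul_eq_div]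
  rfl

theorem bhat2_eq_dotProduct (X : Matrix (Fin n) (Fin 2) ℝ) (y : Fin n → ℝ) (j : Fin 2) :
    bhat2 X y j = bhat2Weights X j ⬝ᵥ y :=
  rfl

theorem bhat1Weights_dotProduct_self (hX : X.rank = 2) :
    bhat1Weights X ⬝ᵥ bhat1Weights X = (∑ i, X i 0 ^ 2)⁻¹ := by
  have hG : ∑ i, X i 0 ^ 2 ≠ 0 := by
    rw [sum_sq_eq_gram]
    exact (posDef_gram hX).diag_pos.ne'
  have hcol : X.col 0 ⬝ᵥ X.col 0 = ∑ i, X i 0 ^ 2 := by simp [dotProduct, sq]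
  rw [bhat1Weights, smul_dotProduct, dotProduct_smul, hcol, smul_eq_mul, smul_eq_mul,
    inv_mul_cancel₀ hG, mul_one]

theorem bhat2Weights_dotProduct_bhat2Weights (hX : X.rank = 2) (j k : Fin 2) :
    bhat2Weights X j ⬝ᵥ bhat2Weights X k = Ai X j k := by
  have hmul : bhat2Weights X * (bhat2Weights X)ᵀ = Ai X := by
    rw [bhat2Weights, transpose_mul, transpose_transpose, (isSymm_Ai X).eq, Matrix.mul_assoc (Ai X),
      ← Matrix.mul_assoc Xᵀ, gram_mul_Ai hX, Matrix.mul_one]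
  exact congr_fun₂ hmul j k

theorem bhat1Weights_dotProduct_bhat2Weights_one (hX : X.rank = 2) :
    bhat1Weights X ⬝ᵥ bhat2Weights X 1 = 0 := by
  have hcol : bhat2Weights X 1 ⬝ᵥ X.col 0 = (Ai X * (Xᵀ * X)) 1 0 := by
    rw [← Matrix.mul_assoc]
    rfl
  rw [bhat1Weights, smul_dotProduct, dotProduct_comm, hcol, Ai_mul_gram hX,
    one_apply_ne (by decide), smul_zero]

theorem hasLaw_bhat1 (hX : X.rank = 2) (μ : Fin n → ℝ) (σ : ℝ) :
    HasLaw (bhat1 X) (gaussianReal (bhat1 X μ) (sd1M1 X σ ^ 2).toNNReal)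
      (gaussianLinearModel μ σ) := by
  have hvar : sd1M1 X σ ^ 2 = σ ^ 2 * (bhat1Weights X ⬝ᵥ bhat1Weights X) := by
    rw [sd1M1, mul_pow, Real.sq_sqrt (by positivity), bhat1Weights_dotProduct_self hX]
  rw [hvar, funext (bhat1_eq_dotProduct X)]
  exact gaussianLinearModel.hasLaw_dotProduct μ σ _

theorem hasLaw_bhat2_one (hX : X.rank = 2) (μ : Fin n → ℝ) (σ : ℝ) :
    HasLaw (fun y ↦ bhat2 X y 1) (gaussianReal (bhat2 X μ 1) (sd2M2 X σ ^ 2).toNNReal)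
      (gaussianLinearModel μ σ) := by
  have hvar : sd2M2 X σ ^ 2 = σ ^ 2 * (bhat2Weights X 1 ⬝ᵥ bhat2Weights X 1) := by
    rw [sd2M2, mul_pow, Real.sq_sqrt (posDef_Ai hX).diag_pos.le,
      bhat2Weights_dotProduct_bhat2Weights hX]
  simp only [hvar, bhat2_eq_dotProduct]
  exact gaussianLinearModel.hasLaw_dotProduct μ σ _

theorem indepFun_bhat1_bhat2_one (hX : X.rank = 2) (μ : Fin n → ℝ) (σ : ℝ) :
    IndepFun (bhat1 X) (fun y ↦ bhat2 X y 1) (gaussianLinearModel μ σ) := by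
  simp only [funext (bhat1_eq_dotProduct X), bhat2_eq_dotProduct]
  exact gaussianLinearModel.indepFun_dotProduct μ σ (bhat1Weights_dotProduct_bhat2Weights_one hX)

theorem measurable_bhat2_apply (X : Matrix (Fin n) (Fin 2) ℝ) (j : Fin 2) :
    Measurable fun y ↦ bhat2 X y j := by
  simp only [bhat2_eq_dotProduct, dotProduct]
  fun_prop

theorem measureReal_bhat1_mem_inter_bhat2_one_mem (hX : X.rank = 2) (hσ : 0 < σ) (hC : 0 ≤ C)
    (hK : 0 ≤ K) (μ : Fin n → ℝ) (t : ℝ) :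
    (gaussianLinearModel μ σ).real
        (bhat1 X ⁻¹' Metric.closedBall t (K * sd1M1 X σ) ∩
          (fun y ↦ bhat2 X y 1) ⁻¹' Metric.closedBall 0 (C * sd2M2 X σ)) =
      Dlt ((bhat1 X μ - t) / sd1M1 X σ) K * Dlt (zeta X μ σ) C := by
  have hindep := (indepFun_bhat1_bhat2_one hX μ σ).measure_inter_preimage_eq_mul
    (Metric.closedBall t (K * sd1M1 X σ)) (Metric.closedBall 0 (C * sd2M2 X σ))
    measurableSet_closedBall measurableSet_closedBall
  rw [measureReal_def, hindep, ENNReal.toReal_mul, ← measureReal_def, ← measureReal_def,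
    measureReal_preimage_closedBall_of_hasLaw_gaussianReal (hasLaw_bhat1 hX μ σ) t
      (sd1M1_pos hX hσ) hK,
    measureReal_preimage_closedBall_of_hasLaw_gaussianReal (hasLaw_bhat2_one hX μ σ) 0
      (sd2M2_pos hX hσ) hC, sub_zero, zeta]

/-- The coverage event with `t` in place of the target when `M₁` is selected; the target under
`M₂` is always `β_{1·M₂}`. The two coverage events of the proposition are the cases
`t = β_{1·M₂}` and `t = β_{1·M₁}`. -/
def covEvent (X : Matrix (Fin n) (Fin 2) ℝ) (μ : Fin n → ℝ) (σ C K t : ℝ) : Set (Fin n → ℝ) :=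
  {y | if |bhat2 X y 1| / sd2M2 X σ > C
    then |bhat2 X y 0 - bhat2 X μ 0| ≤ K * sd1M2 X σ
    else |bhat1 X y - t| ≤ K * sd1M1 X σ}

theorem covFullEvent_eq_covEvent (X : Matrix (Fin n) (Fin 2) ℝ) (μ : Fin n → ℝ) (σ C K : ℝ) :
    covFullEvent X μ σ C K = covEvent X μ σ C K (bhat2 X μ 0) :=
  rfl

theorem covSelEvent_eq_covEvent (X : Matrix (Fin n) (Fin 2) ℝ) (μ : Fin n → ℝ) (σ C K : ℝ) :
    covSelEvent X μ σ C K = covEvent X μ σ C K (bhat1 X μ) :=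
  rfl

theorem measureReal_covEvent (hX : X.rank = 2) (hσ : 0 < σ) (hC : 0 ≤ C) (hK : 0 ≤ K)
    (μ : Fin n → ℝ) (t : ℝ) :
    (gaussianLinearModel μ σ).real (covEvent X μ σ C K t) =
      (gaussianLinearModel μ σ).real {y | |bhat2 X y 0 - bhat2 X μ 0| ≤ K * sd1M2 X σ ∧
          C < |bhat2 X y 1| / sd2M2 X σ} +
        Dlt ((bhat1 X μ - t) / sd1M1 X σ) K * Dlt (zeta X μ σ) C := by
  let S : Set (Fin n → ℝ) := {y | C < |bhat2 X y 1| / sd2M2 X σ}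
  have hSmeas : MeasurableSet S :=
    measurableSet_lt measurable_const ((measurable_bhat2_apply X 1).abs.div_const _)
  have hfull : covEvent X μ σ C K t ∩ S =
      {y | |bhat2 X y 0 - bhat2 X μ 0| ≤ K * sd1M2 X σ ∧ C < |bhat2 X y 1| / sd2M2 X σ} := by
    ext y
    simp +contextual [covEvent, S]
  have hrestricted : covEvent X μ σ C K t \ S =
      bhat1 X ⁻¹' Metric.closedBall t (K * sd1M1 X σ) ∩
        (fun y ↦ bhat2 X y 1) ⁻¹' Metric.closedBall 0 (C * sd2M2 X σ) := by
    ext y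
    by_cases hy : C < |bhat2 X y 1| / sd2M2 X σ
    · simp [covEvent, S, hy, (lt_div_iff₀ (sd2M2_pos hX hσ)).1 hy]
    · simp [covEvent, S, hy, (div_le_iff₀ (sd2M2_pos hX hσ)).1 (not_lt.1 hy), Real.dist_eq]
  rw [← measureReal_inter_add_sdiff hSmeas, hfull, hrestricted,
    measureReal_bhat1_mem_inter_bhat2_one_mem hX hσ hC hK]

end TwoNested

/-- Proposition 1, known variance, full-model target: in the
two-nested-model setting,
`ℙ_{μ,σ}(β_{1·M₂} ∈ β̂_{1·M̂} ± K σ_{1·M̂}) = ℙ_{μ,σ}(β_{1·M̂} ∈ β̂_{1·M̂} ± K σ_{1·M̂})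
+ [Δ(ρζ/√(1−ρ²), K) − Δ(0, K)]·Δ(ζ, C)`. -/
theorem prop1_full_target {n : ℕ} (X : Matrix (Fin n) (Fin 2) ℝ)
    (hrank : X.rank = 2) (μ : Fin n → ℝ) (σ : ℝ) (hσ : 0 < σ)
    (C K : ℝ) (hC : 0 < C) (hK : 0 < K) :
    (gaussianLinearModel μ σ (covFullEvent X μ σ C K)).toReal =
      (gaussianLinearModel μ σ (covSelEvent X μ σ C K)).toReal +
        (Dlt (rho X * zeta X μ σ / Real.sqrt (1 - rho X ^ 2)) K - Dlt 0 K) *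
          Dlt (zeta X μ σ) C := by
  rw [← measureReal_def, ← measureReal_def, covFullEvent_eq_covEvent, covSelEvent_eq_covEvent,
    measureReal_covEvent hrank hσ hC.le hK.le, measureReal_covEvent hrank hσ hC.le hK.le,
    standardized_bias_bhat1 hrank hσ, sub_self, zero_div]
  ring
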